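/- arXiv:hep-th/9512043 — 7 statements merged into one kernel-verified Lean document; each statement's English description precedes it below -/
import Mathlib

section
/- Let Λ be a real 2n×2n matrix, written in n×n blocks as Λ = [[A,B],[C,D]], which is symplectic, i.e. Λᵀ Ω Λ = Ω where Ω = [[0, 1ₙ],[−1ₙ, 0]]. Then for every complex symmetric n×n matrix N such that A + B·N is invertible, the matrix (C + D·N)·(A + B·N)⁻¹ is also symmetric. -/
open Matrix

/-- If `Λ = [[A,B],[C,D]]` is a real symplectic matrix
(`Λᵀ Ω Λ = Ω` with `Ω = [[0,1],[-1,0]]`), then for every complex symmetric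
matrix `N` with `A + B·N` invertible, `(C + D·N)·(A + B·N)⁻¹` is symmetric. -/
theorem symplectic_fractional_linear_preserves_symmetric {n : ℕ}
    (A B C D : Matrix (Fin n) (Fin n) ℝ)
    (hΛ : (fromBlocks A B C D)ᵀ *
        (fromBlocks (0 : Matrix (Fin n) (Fin n) ℝ) (1 : Matrix (Fin n) (Fin n) ℝ)
          (-1 : Matrix (Fin n) (Fin n) ℝ) (0 : Matrix (Fin n) (Fin n) ℝ)) *
        fromBlocks A B C D =
      fromBlocks (0 : Matrix (Fin n) (Fin n) ℝ) (1 : Matrix (Fin n) (Fin n) ℝ)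
        (-1 : Matrix (Fin n) (Fin n) ℝ) (0 : Matrix (Fin n) (Fin n) ℝ))
    (N : Matrix (Fin n) (Fin n) ℂ) (hN : Nᵀ = N)
    (hinv : IsUnit (A.map Complex.ofReal + B.map Complex.ofReal * N)) :
    ((C.map Complex.ofReal + D.map Complex.ofReal * N) *
        (A.map Complex.ofReal + B.map Complex.ofReal * N)⁻¹)ᵀ =
      (C.map Complex.ofReal + D.map Complex.ofReal * N) *
        (A.map Complex.ofReal + B.map Complex.ofReal * N)⁻¹ := by
  simp only [fromBlocks_transpose, fromBlocks_multiply, fromBlocks_inj] at hΛ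
  obtain ⟨h1, h2, h3, h4⟩ := hΛ
  have key : ∀ X Y : Matrix (Fin n) (Fin n) ℝ, X = Y →
      Complex.ofRealHom.mapMatrix X = Complex.ofRealHom.mapMatrix Y := fun X Y h => by rw [h]
  have tr : ∀ X : Matrix (Fin n) (Fin n) ℝ,
      Complex.ofRealHom.mapMatrix Xᵀ = (Complex.ofRealHom.mapMatrix X)ᵀ := fun X => rfl
  have g1 := key _ _ h1
  have g2 := key _ _ h2
  have g3 := key _ _ h3
  have g4 := key _ _ h4
  simp only [map_add, map_mul, map_neg, map_zero, map_one, tr] at g1 g2 g3 g4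
  change IsUnit (Complex.ofRealHom.mapMatrix A + Complex.ofRealHom.mapMatrix B * N) at hinv
  change ((Complex.ofRealHom.mapMatrix C + Complex.ofRealHom.mapMatrix D * N) *
      (Complex.ofRealHom.mapMatrix A + Complex.ofRealHom.mapMatrix B * N)⁻¹)ᵀ =
    (Complex.ofRealHom.mapMatrix C + Complex.ofRealHom.mapMatrix D * N) *
      (Complex.ofRealHom.mapMatrix A + Complex.ofRealHom.mapMatrix B * N)⁻¹
  generalize Complex.ofRealHom.mapMatrix A = a at *
  generalize Complex.ofRealHom.mapMatrix B = b at *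
  generalize Complex.ofRealHom.mapMatrix C = c at *
  generalize Complex.ofRealHom.mapMatrix D = d at *
  have hPQ : (a + b * N)ᵀ * (c + d * N) = (c + d * N)ᵀ * (a + b * N) := by
    simp only [transpose_add, transpose_mul, hN]
    rw [← sub_eq_zero]
    have e : (aᵀ + N * bᵀ) * (c + d * N) - (cᵀ + N * dᵀ) * (a + b * N) =
        ((aᵀ * 0 + cᵀ * -1) * a + (aᵀ * 1 + cᵀ * 0) * c) +
        ((aᵀ * 0 + cᵀ * -1) * b + (aᵀ * 1 + cᵀ * 0) * d) * N +
        N * ((bᵀ * 0 + dᵀ * -1) * a + (bᵀ * 1 + dᵀ * 0) * c) +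
        N * ((bᵀ * 0 + dᵀ * -1) * b + (bᵀ * 1 + dᵀ * 0) * d) * N := by
      noncomm_ring
    rw [e, g1, g2, g3, g4]
    noncomm_ring
  generalize a + b * N = P at *
  generalize c + d * N = Q at *
  have hd : IsUnit P.det := (isUnit_iff_isUnit_det P).1 hinv
  have hdt : IsUnit Pᵀ.det := by rwa [det_transpose]
  rw [transpose_mul, transpose_nonsing_inv]
  calc Pᵀ⁻¹ * Qᵀ = Pᵀ⁻¹ * (Qᵀ * P) * P⁻¹ := by
        rw [Matrix.mul_assoc, Matrix.mul_assoc, mul_nonsing_inv _ hd, Matrix.mul_one]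
    _ = Q * P⁻¹ := by
        rw [← hPQ, ← Matrix.mul_assoc, nonsing_inv_mul _ hdt, Matrix.one_mul]
end

section
/- Let Λ be a real 2n×2n matrix, written in n×n blocks as Λ = [[A,B],[C,D]], which is pseudo-orthogonal in the sense that Λᵀ H′ Λ = H′ where H′ = [[0, 1ₙ],[1ₙ, 0]]. Then for every real n×n matrix N such that both A + B·N and A − B·Nᵀ are invertible, one has (C − D·Nᵀ)·(A − B·Nᵀ)⁻¹ = −[(C + D·N)·(A + B·N)⁻¹]ᵀ; that is, taking the negative of the transpose of N before or after the fractional linear transformation induced by Λ gives the same result. -/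
open Matrix

/-- If `Λ = [[A,B],[C,D]]` is a real pseudo-orthogonal matrix
(`Λᵀ H′ Λ = H′` with `H′ = [[0,1],[1,0]]`), then for every real matrix `N` with
`A + B·N` and `A − B·Nᵀ` invertible, the fractional linear transformation
commutes with `N ↦ −Nᵀ`:
`(C − D·Nᵀ)·(A − B·Nᵀ)⁻¹ = −[(C + D·N)·(A + B·N)⁻¹]ᵀ`. -/
theorem pseudo_orthogonal_fractional_linear_neg_transpose {n : ℕ}
    (A B C D : Matrix (Fin n) (Fin n) ℝ)
    (hΛ : (fromBlocks A B C D)ᵀ *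
        (fromBlocks (0 : Matrix (Fin n) (Fin n) ℝ) (1 : Matrix (Fin n) (Fin n) ℝ)
          (1 : Matrix (Fin n) (Fin n) ℝ) (0 : Matrix (Fin n) (Fin n) ℝ)) *
        fromBlocks A B C D =
      fromBlocks (0 : Matrix (Fin n) (Fin n) ℝ) (1 : Matrix (Fin n) (Fin n) ℝ)
        (1 : Matrix (Fin n) (Fin n) ℝ) (0 : Matrix (Fin n) (Fin n) ℝ))
    (N : Matrix (Fin n) (Fin n) ℝ)
    (hinv : IsUnit (A + B * N)) (hinv' : IsUnit (A - B * Nᵀ)) :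
    (C - D * Nᵀ) * (A - B * Nᵀ)⁻¹ = -((C + D * N) * (A + B * N)⁻¹)ᵀ := by
  rw [fromBlocks_transpose, fromBlocks_multiply, fromBlocks_multiply, fromBlocks_inj] at hΛ
  simp only [mul_zero, mul_one, zero_add, add_zero] at hΛ
  obtain ⟨h1, h2, h3, h4⟩ := hΛ
  have key : (A + B * N)ᵀ * (C - D * Nᵀ) + (C + D * N)ᵀ * (A - B * Nᵀ) = 0 := by
    have e : (A + B * N)ᵀ * (C - D * Nᵀ) + (C + D * N)ᵀ * (A - B * Nᵀ)
        = (Cᵀ * A + Aᵀ * C) - (Cᵀ * B + Aᵀ * D) * Nᵀ + Nᵀ * (Dᵀ * A + Bᵀ * C)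
          - Nᵀ * (Dᵀ * B + Bᵀ * D) * Nᵀ := by
      simp only [transpose_add, transpose_mul]
      noncomm_ring
    rw [e, h1, h2, h3, h4]
    simp
  have hP : IsUnit (A + B * N).det := (isUnit_iff_isUnit_det _).1 hinv
  have hQ : IsUnit (A - B * Nᵀ).det := (isUnit_iff_isUnit_det _).1 hinv'
  have hPT : IsUnit ((A + B * N)ᵀ).det := by rwa [det_transpose]
  generalize A + B * N = P at *
  generalize A - B * Nᵀ = Q at *
  generalize C - D * Nᵀ = X at *
  generalize C + D * N = Y at *
  rw [transpose_mul, transpose_nonsing_inv]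
  have k : X = -(Pᵀ⁻¹ * (Yᵀ * Q)) := by
    rw [← mul_neg, ← eq_neg_of_add_eq_zero_left key, nonsing_inv_mul_cancel_left _ _ hPT]
  rw [k, neg_mul, ← mul_assoc, mul_nonsing_inv_cancel_right _ _ hQ]
end

section
/- Let U₀, U₁ be complex n×n matrices satisfying U₀† Ū₁ = U₁† Ū₀ (where Ū denotes entrywise conjugation and U† the conjugate transpose), and suppose U₀† + U₁† is invertible. Then the Gaillard–Zumino matrix 𝒩 := i·(U₀† + U₁†)⁻¹·(U₀† − U₁†) is symmetric: 𝒩ᵀ = 𝒩. -/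
open Matrix

/-- If `U₀ᴴ Ū₁ = U₁ᴴ Ū₀` and `U₀ᴴ + U₁ᴴ` is invertible, then the
Gaillard–Zumino matrix `𝒩 = i·(U₀ᴴ + U₁ᴴ)⁻¹·(U₀ᴴ − U₁ᴴ)` is symmetric. -/
theorem gaillard_zumino_matrix_symmetric {n : ℕ}
    (U₀ U₁ : Matrix (Fin n) (Fin n) ℂ)
    (hsym : U₀ᴴ * U₁.map star = U₁ᴴ * U₀.map star)
    (hinv : IsUnit (U₀ᴴ + U₁ᴴ)) :
    (Complex.I • ((U₀ᴴ + U₁ᴴ)⁻¹ * (U₀ᴴ - U₁ᴴ)))ᵀ =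
      Complex.I • ((U₀ᴴ + U₁ᴴ)⁻¹ * (U₀ᴴ - U₁ᴴ)) := by
  have h0 : U₀.map star = (U₀ᴴ)ᵀ := by ext i j; simp
  have h1 : U₁.map star = (U₁ᴴ)ᵀ := by ext i j; simp
  rw [h0, h1] at hsym
  generalize U₀ᴴ = A at *
  generalize U₁ᴴ = B at *
  have hd : IsUnit (A + B).det := (Matrix.isUnit_iff_isUnit_det _).1 hinv
  have hdT : IsUnit ((A + B)ᵀ).det := by rwa [Matrix.det_transpose]
  have key : (A + B) * (A - B)ᵀ = (A - B) * (A + B)ᵀ := by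
    simp only [Matrix.transpose_sub, Matrix.transpose_add, add_mul, sub_mul, mul_add, mul_sub, hsym]
    abel
  rw [Matrix.transpose_smul, Matrix.transpose_mul, Matrix.transpose_nonsing_inv]
  congr 1
  calc (A - B)ᵀ * ((A + B)ᵀ)⁻¹
      = (A + B)⁻¹ * ((A + B) * (A - B)ᵀ) * ((A + B)ᵀ)⁻¹ := by
        rw [Matrix.nonsing_inv_mul_cancel_left _ _ hd]
    _ = (A + B)⁻¹ * (A - B) := by
        rw [key, ← Matrix.mul_assoc, Matrix.mul_nonsing_inv_cancel_right _ _ hdT]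
end

section
/- Let 𝒞 = (1/√2)·[[1ₙ, i·1ₙ],[1ₙ, −i·1ₙ]] be the Cayley matrix. Let S = [[T, V̄],[V, T̄]] be a complex 2n×2n matrix in conjugate-block form; then Λ := 𝒞⁻¹ S 𝒞 has real entries, and we write Λ = [[A,B],[C,D]] in n×n blocks. Suppose O = [[U₀, Ū₁],[U₁, Ū₀]] and O′ = [[U₀′, Ū₁′],[U₁′, Ū₀′]] are complex 2n×2n matrices in conjugate-block form with U₀† Ū₁ = U₁† Ū₀ and U₀′† Ū₁′ = U₁′† Ū₀′, and that S·O = O′·[[W, 0],[0, W̄]] for some invertible complex n×n matrix W. If U₀† + U₁†, U₀′† + U₁′† and A + B·𝒩 are invertible, where 𝒩 := i·(U₀† + U₁†)⁻¹·(U₀† − U₁†) and 𝒩′ := i·(U₀′† + U₁′†)⁻¹·(U₀′† − U₁′†), then 𝒩′ = (C + D·𝒩)·(A + B·𝒩)⁻¹. -/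
open Matrix

/-- The Cayley matrix `𝒞 = (1/√2)·[[1, i·1],[1, −i·1]]`. -/
noncomputable def cayley (n : ℕ) : Matrix (Fin n ⊕ Fin n) (Fin n ⊕ Fin n) ℂ :=
  ((Real.sqrt 2 : ℂ))⁻¹ •
    fromBlocks (1 : Matrix (Fin n) (Fin n) ℂ) (Complex.I • (1 : Matrix (Fin n) (Fin n) ℂ))
      (1 : Matrix (Fin n) (Fin n) ℂ) (-(Complex.I • (1 : Matrix (Fin n) (Fin n) ℂ)))

theorem cayley_isUnit_det (n : ℕ) : IsUnit (cayley n).det := by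
  rw [← Matrix.isUnit_iff_isUnit_det]
  have h2 : ((Real.sqrt 2 : ℝ) : ℂ) ≠ 0 := by
    simp
  have hK : (fromBlocks (1 : Matrix (Fin n) (Fin n) ℂ) (Complex.I • (1 : Matrix (Fin n) (Fin n) ℂ))
      (1 : Matrix (Fin n) (Fin n) ℂ) (-(Complex.I • (1 : Matrix (Fin n) (Fin n) ℂ)))) *
      ((2 : ℂ)⁻¹ • fromBlocks (1 : Matrix (Fin n) (Fin n) ℂ) (1 : Matrix (Fin n) (Fin n) ℂ)
        (-(Complex.I • (1 : Matrix (Fin n) (Fin n) ℂ))) (Complex.I • (1 : Matrix (Fin n) (Fin n) ℂ))) = 1 := by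
    rw [Matrix.mul_smul, fromBlocks_multiply, fromBlocks_smul, ← fromBlocks_one]
    congr 1 <;> simp [smul_smul, ← two_smul ℂ (1 : Matrix (Fin n) (Fin n) ℂ)]
  have : cayley n * (((Real.sqrt 2 : ℝ) : ℂ) • ((2 : ℂ)⁻¹ •
      fromBlocks (1 : Matrix (Fin n) (Fin n) ℂ) (1 : Matrix (Fin n) (Fin n) ℂ)
        (-(Complex.I • (1 : Matrix (Fin n) (Fin n) ℂ))) (Complex.I • (1 : Matrix (Fin n) (Fin n) ℂ)))) = 1 := by
    unfold cayley
    rw [Matrix.mul_smul, Matrix.smul_mul, hK, smul_smul, mul_inv_cancel₀ h2, one_smul]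
  exact IsUnit.of_mul_eq_one _ this

theorem cayley_blocks {n : ℕ} (S : Matrix (Fin n ⊕ Fin n) (Fin n ⊕ Fin n) ℂ)
    (T Vb V Tb A B C D : Matrix (Fin n) (Fin n) ℂ)
    (hS : S = fromBlocks T Vb V Tb)
    (hblocks : (cayley n)⁻¹ * S * cayley n = fromBlocks A B C D) :
    T + Vb = A + Complex.I • C ∧ Complex.I • (T - Vb) = B + Complex.I • D ∧
    V + Tb = A - Complex.I • C ∧ Complex.I • (V - Tb) = B - Complex.I • D := by
  have h2 : (((Real.sqrt 2 : ℝ) : ℂ))⁻¹ ≠ 0 := by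
    simp
  have h : S * cayley n = cayley n * fromBlocks A B C D := by
    rw [← hblocks, Matrix.mul_assoc, Matrix.mul_nonsing_inv_cancel_left _ _ (cayley_isUnit_det n)]
  unfold cayley at h
  rw [Matrix.mul_smul, Matrix.smul_mul] at h
  have h := smul_right_injective _ h2 h
  rw [hS, fromBlocks_multiply, fromBlocks_multiply, fromBlocks_inj] at h
  simpa [smul_sub, sub_eq_add_neg] using h

/-- The core relation `N X = Y` from the symmetry condition. -/
theorem period_mul {n : ℕ} (P0 P1 Q0 Q1 N : Matrix (Fin n) (Fin n) ℂ)
    (hU : P0 * Q1 = P1 * Q0) (hP : IsUnit (P0 + P1))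
    (hN : N = Complex.I • ((P0 + P1)⁻¹ * (P0 - P1))) :
    N * (Q0 + Q1) = Complex.I • (Q0 - Q1) := by
  rw [Matrix.isUnit_iff_isUnit_det] at hP
  rw [hN, Matrix.smul_mul, Matrix.mul_assoc]
  have : (P0 - P1) * (Q0 + Q1) = (P0 + P1) * (Q0 - Q1) := by
    simp only [sub_mul, mul_add, add_mul, mul_sub, hU]
    abel
  rw [this, Matrix.nonsing_inv_mul_cancel_left _ _ hP]

/-- Let `S = [[T,V̄],[V,T̄]]` be in conjugate-block form and let
`Λ = 𝒞⁻¹ S 𝒞 = [[A,B],[C,D]]`.  If `O = [[U₀,Ū₁],[U₁,Ū₀]]`, `O′ = [[U₀′,Ū₁′],[U₁′,Ū₀′]]`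
satisfy the Gaillard–Zumino symmetry conditions, `S·O = O′·[[W,0],[0,W̄]]` with `W`
invertible, and `U₀ᴴ+U₁ᴴ`, `U₀′ᴴ+U₁′ᴴ`, `A + B·𝒩` are invertible, then `Λ` is real
and `𝒩′ = (C + D·𝒩)·(A + B·𝒩)⁻¹`, where `𝒩`, `𝒩′` are the master-formula matrices. -/
theorem gaillard_zumino_master_formula_covariance {n : ℕ}
    (T V U₀ U₁ U₀' U₁' W : Matrix (Fin n) (Fin n) ℂ)
    (S O O' : Matrix (Fin n ⊕ Fin n) (Fin n ⊕ Fin n) ℂ)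
    (A B C D N N' : Matrix (Fin n) (Fin n) ℂ)
    (hS : S = fromBlocks T (V.map star) V (T.map star))
    (hO : O = fromBlocks U₀ (U₁.map star) U₁ (U₀.map star))
    (hO' : O' = fromBlocks U₀' (U₁'.map star) U₁' (U₀'.map star))
    (hU : U₀ᴴ * U₁.map star = U₁ᴴ * U₀.map star)
    (hU' : U₀'ᴴ * U₁'.map star = U₁'ᴴ * U₀'.map star)
    (hW : IsUnit W)
    (hact : S * O = O' * fromBlocks W 0 0 (W.map star))
    (hP : IsUnit (U₀ᴴ + U₁ᴴ))
    (hP' : IsUnit (U₀'ᴴ + U₁'ᴴ))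
    (hN : N = Complex.I • ((U₀ᴴ + U₁ᴴ)⁻¹ * (U₀ᴴ - U₁ᴴ)))
    (hN' : N' = Complex.I • ((U₀'ᴴ + U₁'ᴴ)⁻¹ * (U₀'ᴴ - U₁'ᴴ)))
    (hblocks : (cayley n)⁻¹ * S * cayley n = fromBlocks A B C D)
    (hAB : IsUnit (A + B * N)) :
    (∀ p q, (((cayley n)⁻¹ * S * cayley n) p q).im = 0) ∧
      N' = (C + D * N) * (A + B * N)⁻¹ := by
  obtain ⟨e1, e2, e3, e4⟩ := cayley_blocks S _ _ _ _ A B C D hS hblocks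
  have hI := Complex.I_mul_I
  constructor
  · have im0 : ∀ z : ℂ, ∀ t v : ℂ, 2 * z = t + v + star t + star v → z.im = 0 := by
      intro z t v h
      have := congrArg Complex.im h
      simp at this
      linarith
    rw [hblocks]
    rintro (p | p) (q | q) <;>
    · have f1 := congrFun (congrFun e1 p) q
      have f2 := congrFun (congrFun e2 p) q
      have f3 := congrFun (congrFun e3 p) q
      have f4 := congrFun (congrFun e4 p) q
      simp [Complex.ext_iff] at f1 f2 f3 f4 ⊢
      linarith [f1.1, f1.2, f2.1, f2.2, f3.1, f3.2, f4.1, f4.2]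
  · have hX := period_mul _ _ _ _ N hU hP hN
    have hX' := period_mul _ _ _ _ N' hU' hP' hN'
    have hXu : IsUnit (U₀.map star + U₁.map star) := by
      have : U₀.map star + U₁.map star = (U₀ᴴ + U₁ᴴ)ᵀ := by
        ext i j; simp
      rw [this]
      exact (Matrix.isUnit_transpose _).2 hP
    rw [hS, hO, hO', fromBlocks_multiply, fromBlocks_multiply, fromBlocks_inj] at hact
    obtain ⟨-, a1, -, a2⟩ := hact
    simp only [Matrix.mul_zero, zero_add] at a1 a2
    generalize U₀.map star = Q0 at *
    generalize U₁.map star = Q1 at *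
    generalize U₀'.map star = R0 at *
    generalize U₁'.map star = R1 at *
    generalize W.map star = w at *
    generalize V.map star = Vb at *
    generalize T.map star = Tb at *
    have hA : A = (2:ℂ)⁻¹ • (T + Vb + (V + Tb)) := by
      rw [e1, e3]; module
    have hC : C = (2:ℂ)⁻¹ • -(Complex.I • (T + Vb - (V + Tb))) := by
      rw [e1, e3]
      have : A + Complex.I • C - (A - Complex.I • C) = (2 * Complex.I) • C := by module
      rw [this, smul_smul, ← neg_smul, smul_smul]
      have : (2:ℂ)⁻¹ * -(Complex.I * (2 * Complex.I)) = 1 := by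
        linear_combination (-1:ℂ) * hI
      rw [this, one_smul]
    have hB : B = (2:ℂ)⁻¹ • (Complex.I • (T - Vb) + Complex.I • (V - Tb)) := by
      rw [e2, e4]; module
    have hD : D = (2:ℂ)⁻¹ • (T - Vb - (V - Tb)) := by
      have h : Complex.I • D = Complex.I • ((2:ℂ)⁻¹ • (T - Vb - (V - Tb))) := by
        have : Complex.I • ((2:ℂ)⁻¹ • (T - Vb - (V - Tb))) =
          (2:ℂ)⁻¹ • (Complex.I • (T - Vb) - Complex.I • (V - Tb)) := by module
        rw [this, e2, e4]; module
      exact smul_right_injective _ Complex.I_ne_zero h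
    have k1 : (A + B * N) * (Q0 + Q1) = (R0 + R1) * w := by
      rw [add_mul, Matrix.mul_assoc, hX, add_mul R0, ← a1, ← a2, hA, hB]
      simp only [Matrix.smul_mul, Matrix.mul_smul, add_mul, mul_add, sub_mul, mul_sub, smul_add,
        smul_sub, smul_smul]
      have : Complex.I * ((2:ℂ)⁻¹ * Complex.I) = -(2:ℂ)⁻¹ := by
        linear_combination (2:ℂ)⁻¹ * hI
      simp only [this]
      module
    have k2 : (C + D * N) * (Q0 + Q1) = (Complex.I • (R0 - R1)) * w := by
      rw [add_mul, Matrix.mul_assoc, hX, Matrix.smul_mul, sub_mul R0, ← a1, ← a2, hC, hD]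
      simp only [Matrix.smul_mul, Matrix.mul_smul, add_mul, mul_add, sub_mul, mul_sub, smul_add,
        smul_sub, smul_smul, neg_mul, smul_neg]
      module
    have k3 : N' * (A + B * N) = C + D * N := by
      apply hXu.mul_right_cancel
      rw [Matrix.mul_assoc, k1, ← Matrix.mul_assoc, hX', k2]
    rw [← k3, Matrix.mul_nonsing_inv_cancel_right _ _
      ((Matrix.isUnit_iff_isUnit_det _).1 hAB)]
end

section
/- Let η = diag(1_m, −1_n), let M be a real symmetric (m+n)×(m+n) matrix with M η M = η, let S ∈ ℂ with Im S ≠ 0, and let a,b,c,d ∈ ℝ with ad − bc = 1. Set 𝒩 := i·(Im S)·M + (Re S)·η. Then a + bS ≠ 0, the matrix a·1 + b·η𝒩 is invertible, and (c·η + d·𝒩)·(a·1 + b·η𝒩)⁻¹ = i·(Im S′)·M + (Re S′)·η, where S′ := (c + dS)/(a + bS). -/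
open Matrix

/-- For `η = diag(1_m,−1_n)`, `M` real symmetric with `MηM = η`,
`S ∈ ℂ` with `Im S ≠ 0`, and `[[a,b],[c,d]] ∈ SL(2,ℝ)`, set
`𝒩 = i·(Im S)·M + (Re S)·η`.  Then `a + bS ≠ 0`, `a·1 + b·η𝒩` is invertible, and
`(c·η + d·𝒩)·(a·1 + b·η𝒩)⁻¹ = i·(Im S′)·M + (Re S′)·η` with `S′ = (c+dS)/(a+bS)`. -/
theorem period_matrix_SL2_covariance {m n : ℕ}
    (η M : Matrix (Fin m ⊕ Fin n) (Fin m ⊕ Fin n) ℝ)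
    (hη : η = fromBlocks 1 0 0 (-1))
    (hMsymm : Mᵀ = M) (hMη : M * η * M = η)
    (S : ℂ) (hS : S.im ≠ 0)
    (a b c d : ℝ) (hdet : a * d - b * c = 1)
    (N : Matrix (Fin m ⊕ Fin n) (Fin m ⊕ Fin n) ℂ)
    (hN : N = (Complex.I * (S.im : ℂ)) • M.map Complex.ofReal +
      (S.re : ℂ) • η.map Complex.ofReal)
    (S' : ℂ)
    (hS' : S' = ((c : ℂ) + (d : ℂ) * S) / ((a : ℂ) + (b : ℂ) * S)) :
    ((a : ℂ) + (b : ℂ) * S ≠ 0) ∧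
    IsUnit ((a : ℂ) • (1 : Matrix (Fin m ⊕ Fin n) (Fin m ⊕ Fin n) ℂ) +
      (b : ℂ) • (η.map Complex.ofReal * N)) ∧
    ((c : ℂ) • η.map Complex.ofReal + (d : ℂ) • N) *
        ((a : ℂ) • (1 : Matrix (Fin m ⊕ Fin n) (Fin m ⊕ Fin n) ℂ) +
          (b : ℂ) • (η.map Complex.ofReal * N))⁻¹ =
      (Complex.I * (S'.im : ℂ)) • M.map Complex.ofReal +
        (S'.re : ℂ) • η.map Complex.ofReal := by
  have hne : (a : ℂ) + (b : ℂ) * S ≠ 0 := by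
    intro h
    have h1 := congrArg Complex.re h
    have h2 := congrArg Complex.im h
    simp at h1 h2
    rcases h2 with h2 | h2
    · subst h2
      simp at h1
      subst h1
      simp at hdet
    · exact hS h2
  have hHH : η.map Complex.ofReal * η.map Complex.ofReal = 1 := by
    have h : η * η = 1 := by
      rw [hη, fromBlocks_multiply]
      simp
    have h2 := congrArg (fun A => A.map Complex.ofRealHom) h
    simp [Matrix.map_mul] at h2
    exact h2
  have hKHK : M.map Complex.ofReal * η.map Complex.ofReal * M.map Complex.ofReal
      = η.map Complex.ofReal := by
    have h2 := congrArg (fun A => A.map Complex.ofRealHom) hMη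
    simp [Matrix.map_mul] at h2
    exact h2
  have hmul : S' * ((a : ℂ) + (b : ℂ) * S) = (c : ℂ) + (d : ℂ) * S := by
    rw [hS']
    exact div_mul_cancel₀ _ hne
  have hre : S'.re * (a + b * S.re) - S'.im * (b * S.im) = c + d * S.re := by
    simpa using congrArg Complex.re hmul
  have him : S'.re * (b * S.im) + S'.im * (a + b * S.re) = d * S.im := by
    simpa using congrArg Complex.im hmul
  have hnorm : (a + b * S.re) ^ 2 + (b * S.im) ^ 2 ≠ 0 := by
    intro h
    apply hne
    have h1 : a + b * S.re = 0 := by nlinarith [sq_nonneg (a + b * S.re), sq_nonneg (b * S.im)]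
    have h2 : b * S.im = 0 := by nlinarith [sq_nonneg (a + b * S.re), sq_nonneg (b * S.im)]
    apply Complex.ext
    · simpa using h1
    · simpa using h2
  generalize η.map Complex.ofReal = H at *
  generalize M.map Complex.ofReal = K at *
  have hJJ : (H * K) * (H * K) = 1 := by
    rw [Matrix.mul_assoc, ← Matrix.mul_assoc K, hKHK, hHH]
  have hHJ : H * (H * K) = K := by rw [← Matrix.mul_assoc, hHH, Matrix.one_mul]
  have hKJ : K * (H * K) = H := by rw [← Matrix.mul_assoc, hKHK]
  have hP : (a : ℂ) • (1 : Matrix (Fin m ⊕ Fin n) (Fin m ⊕ Fin n) ℂ) + (b : ℂ) • (H * N)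
      = ((a + b * S.re : ℝ) : ℂ) • (1 : Matrix (Fin m ⊕ Fin n) (Fin m ⊕ Fin n) ℂ)
        + (Complex.I * ((b * S.im : ℝ) : ℂ)) • (H * K) := by
    rw [hN, Matrix.mul_add, Matrix.mul_smul, Matrix.mul_smul, hHH]
    push_cast
    module
  rw [hP]
  generalize hp : a + b * S.re = p at *
  generalize hq : b * S.im = q at *
  generalize H * K = J at *
  have hU : IsUnit ((p : ℂ) • (1 : Matrix (Fin m ⊕ Fin n) (Fin m ⊕ Fin n) ℂ)
      + (Complex.I * (q : ℂ)) • J) := by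
    have hnC : (p : ℂ) ^ 2 + (q : ℂ) ^ 2 ≠ 0 := by exact_mod_cast hnorm
    refine IsUnit.of_mul_eq_one (((p : ℂ) ^ 2 + (q : ℂ) ^ 2)⁻¹ •
      ((p : ℂ) • (1 : Matrix (Fin m ⊕ Fin n) (Fin m ⊕ Fin n) ℂ)
      - (Complex.I * (q : ℂ)) • J)) ?_
    rw [Matrix.mul_smul, inv_smul_eq_iff₀ hnC]
    simp only [Matrix.add_mul, Matrix.mul_sub, Matrix.smul_mul, Matrix.mul_smul, hJJ,
      Matrix.one_mul, Matrix.mul_one]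
    match_scalars
    · linear_combination (-(q : ℂ) ^ 2) * Complex.I_sq
    · ring
  refine ⟨hne, hU, ?_⟩
  have hnum : (c : ℂ) • H + (d : ℂ) • N = ((Complex.I * (S'.im : ℂ)) • K + (S'.re : ℂ) • H) *
      ((p : ℂ) • (1 : Matrix (Fin m ⊕ Fin n) (Fin m ⊕ Fin n) ℂ) + (Complex.I * (q : ℂ)) • J) := by
    have hreC : (S'.re : ℂ) * p - S'.im * q = c + d * S.re := by exact_mod_cast hre
    have himC : (S'.re : ℂ) * q + S'.im * p = d * S.im := by exact_mod_cast him
    simp only [Matrix.add_mul, Matrix.mul_add, Matrix.smul_mul, Matrix.mul_smul, hHJ, hKJ,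
      Matrix.mul_one, hN]
    match_scalars
    · linear_combination -hreC - (S'.im : ℂ) * q * Complex.I_sq
    · linear_combination -Complex.I * himC
  rw [hnum, Matrix.mul_assoc, Matrix.mul_nonsing_inv _ ((Matrix.isUnit_iff_isUnit_det _).mp hU),
    Matrix.mul_one]
end

section
/- Let η = diag(1, 1, −1, …, −1) be the (2+n)×(2+n) metric of signature (2,n) and let L be a real (2+n)×(2+n) matrix with Lᵀ η L = η. Denote by L₀ and L₁ the first two columns of L and set Φ := (L₀ + i·L₁)/√2 ∈ ℂ^{2+n}. Then: (i) Φ̄ᵀ η Φ = 1; (ii) Φᵀ η Φ = 0; (iii) Φ Φ̄ᵀ + Φ̄ Φᵀ = (1/2)·(L Lᵀ + η). -/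
open Matrix

/-- For `L ∈ SO(2,n)` (i.e. `LᵀηL = η` with `η = diag(1,1,−1,…,−1)`)
let `Φ = (L₀ + i·L₁)/√2` be built from the first two columns of `L`.  Then
(i) `Φ̄ᵀ η Φ = 1`; (ii) `Φᵀ η Φ = 0`; (iii) `Φ Φ̄ᵀ + Φ̄ Φᵀ = ½(L Lᵀ + η)`. -/
theorem calabi_visentini_section_identities {n : ℕ}
    (η L : Matrix (Fin 2 ⊕ Fin n) (Fin 2 ⊕ Fin n) ℝ)
    (hη : η = fromBlocks 1 0 0 (-1))
    (hL : Lᵀ * η * L = η)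
    (Φ : (Fin 2 ⊕ Fin n) → ℂ)
    (hΦ : Φ = fun i =>
      ((L i (Sum.inl 0) : ℂ) + Complex.I * (L i (Sum.inl 1) : ℂ)) / (Real.sqrt 2 : ℂ)) :
    (star Φ) ⬝ᵥ ((η.map Complex.ofReal).mulVec Φ) = 1 ∧
    Φ ⬝ᵥ ((η.map Complex.ofReal).mulVec Φ) = 0 ∧
    vecMulVec Φ (star Φ) + vecMulVec (star Φ) Φ =
      ((1 : ℂ) / 2) • ((L * Lᵀ).map Complex.ofReal + η.map Complex.ofReal) := by
  have hs : ((Real.sqrt 2 : ℝ) : ℂ)⁻¹ * ((Real.sqrt 2 : ℝ) : ℂ)⁻¹ = 1 / 2 := by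
    rw [← mul_inv, ← Complex.ofReal_mul, Real.mul_self_sqrt (by norm_num)]
    norm_num
  have hηη : η * η = 1 := by
    rw [hη, fromBlocks_multiply]
    simp
  have hR : L * η * Lᵀ = η := by
    have h1 : (η * Lᵀ * η) * L = 1 := by
      rw [Matrix.mul_assoc, Matrix.mul_assoc, ← Matrix.mul_assoc Lᵀ, hL, hηη]
    have h2 : L * (η * Lᵀ * η) = 1 := mul_eq_one_comm.mp h1
    calc L * η * Lᵀ = L * (η * Lᵀ * η) * η := by
          simp only [Matrix.mul_assoc, hηη, Matrix.mul_one]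
      _ = η := by rw [h2, Matrix.one_mul]
  obtain ⟨u, hu⟩ : ∃ u : Fin 2 → (Fin 2 ⊕ Fin n) → ℂ,
      u = fun a i => ((L i (Sum.inl a) : ℝ) : ℂ) := ⟨_, rfl⟩
  have hform : ∀ a b : Fin 2, u a ⬝ᵥ ((η.map Complex.ofReal).mulVec (u b))
      = ((η (Sum.inl a) (Sum.inl b) : ℝ) : ℂ) := by
    intro a b
    have h := congrFun (congrFun hL (Sum.inl a)) (Sum.inl b)
    rw [← h, Matrix.mul_assoc, hu]
    simp only [dotProduct, mulVec, Matrix.mul_apply, Matrix.transpose_apply, Matrix.map_apply,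
      Complex.ofReal_sum, Complex.ofReal_mul]
  have hΦ1 : Φ = ((Real.sqrt 2 : ℝ) : ℂ)⁻¹ • (u 0 + Complex.I • u 1) := by
    rw [hΦ, hu]; funext i
    simp [div_eq_inv_mul]
  have hΦ2 : star Φ = ((Real.sqrt 2 : ℝ) : ℂ)⁻¹ • (u 0 - Complex.I • u 1) := by
    rw [hΦ, hu]; funext i
    simp [div_eq_inv_mul, sub_eq_add_neg]
  have h00 := hform 0 0
  have h01 := hform 0 1
  have h10 := hform 1 0
  have h11 := hform 1 1
  simp [hη] at h00 h01 h10 h11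
  refine ⟨?_, ?_, ?_⟩
  · rw [hΦ2, hΦ1, hη]
    simp only [mulVec_smul, mulVec_add, dotProduct_smul, smul_dotProduct, dotProduct_add,
      sub_dotProduct, smul_eq_mul]
    simp [h00, h01, h10, h11]
    linear_combination 2 * hs - ((Real.sqrt 2 : ℝ) : ℂ)⁻¹ ^ 2 * Complex.I_sq
  · rw [hΦ1, hη]
    simp only [mulVec_smul, mulVec_add, dotProduct_smul, smul_dotProduct, dotProduct_add,
      add_dotProduct, smul_eq_mul]
    simp [h00, h01, h10, h11]
    linear_combination ((Real.sqrt 2 : ℝ) : ℂ)⁻¹ * Complex.I_sq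
  · rw [hΦ2, hΦ1]
    ext i j
    have h := congrFun (congrFun hR i) j
    have h2 : (L * Lᵀ) i j + η i j
        = 2 * (L i (Sum.inl 0) * L j (Sum.inl 0) + L i (Sum.inl 1) * L j (Sum.inl 1)) := by
      rw [← h, hη]
      simp [Matrix.mul_apply, Fintype.sum_sum_type, Matrix.one_apply]
      ring
    have h3 := congrArg (fun x : ℝ => (x : ℂ)) h2
    simp only [Complex.ofReal_add, Complex.ofReal_mul, Complex.ofReal_ofNat] at h3
    simp only [Matrix.add_apply, Matrix.smul_apply, Matrix.map_apply, vecMulVec_apply, hu,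
      Pi.smul_apply, Pi.add_apply, Pi.sub_apply, smul_eq_mul]
    rw [h3]
    linear_combination (2 * ((L i (Sum.inl 0) : ℂ) * L j (Sum.inl 0)
      - Complex.I ^ 2 * L i (Sum.inl 1) * L j (Sum.inl 1))) * hs
      - (L i (Sum.inl 1) : ℂ) * L j (Sum.inl 1) * Complex.I_sq
end

section
/- Define, for X, Y, u ∈ ℂ, the Seiberg–Witten quartic potential W(X, Y; u) := (1/4)·(X⁴ + Y⁴) + (u/2)·X²Y². Then: (i) for all X, Y, u: W(i·X, Y; u) = W(X, Y; −u); and (ii) for all X, Y and all u ≠ −1: W( (i·X + Y)/√2, (−i·X + Y)/√2 ; u ) = ((1 + u)/2) · W( X, Y ; (u − 3)/(u + 1) ). -/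
/-- The Seiberg–Witten quartic potential `W(X,Y;u) = ¼(X⁴+Y⁴) + (u/2)X²Y²`. -/
noncomputable def SWpotential (X Y u : ℂ) : ℂ :=
  (1 / 4) * (X ^ 4 + Y ^ 4) + (u / 2) * X ^ 2 * Y ^ 2

/-- The generators of the dihedral symmetry of the Seiberg–Witten
quartic potential: (i) `W(iX, Y; u) = W(X, Y; −u)`; (ii) for `u ≠ −1`,
`W((iX+Y)/√2, (−iX+Y)/√2; u) = ((1+u)/2)·W(X, Y; (u−3)/(u+1))`. -/
theorem seiberg_witten_potential_dihedral_symmetry :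
    (∀ X Y u : ℂ, SWpotential (Complex.I * X) Y u = SWpotential X Y (-u)) ∧
    (∀ X Y u : ℂ, u ≠ -1 →
      SWpotential ((Complex.I * X + Y) / (Real.sqrt 2 : ℂ))
          ((-(Complex.I * X) + Y) / (Real.sqrt 2 : ℂ)) u =
        ((1 + u) / 2) * SWpotential X Y ((u - 3) / (u + 1))) := by
  have hI : Complex.I ^ 2 = -1 := Complex.I_sq
  have hI4 : Complex.I ^ 4 = 1 := Complex.I_pow_four
  refine ⟨fun X Y u => ?_, fun X Y u hu => ?_⟩
  · unfold SWpotential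
    rw [mul_pow, mul_pow, hI, hI4]
    ring
  · have hu' : u + 1 ≠ 0 := fun h => hu (eq_neg_of_add_eq_zero_left h)
    have h2 : ((Real.sqrt 2 : ℝ) : ℂ) ^ 2 = 2 := by
      rw [← Complex.ofReal_pow, Real.sq_sqrt (by norm_num)]
      norm_num
    have h4 : ((Real.sqrt 2 : ℝ) : ℂ) ^ 4 = 4 := by
      rw [show (4 : ℕ) = 2 * 2 from rfl, pow_mul, h2]
      norm_num
    have hr : (1 + u) * ((u - 3) / (u + 1)) = u - 3 := by
      field_simp
      ring
    unfold SWpotential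
    rw [div_pow, div_pow, div_pow, div_pow, h2, h4]
    linear_combination (-(1 / 4) * X ^ 2 * Y ^ 2) * hr
      + (1 / 8 * (1 + u) * X ^ 4) * hI4 + ((3 / 4 - u / 4) * X ^ 2 * Y ^ 2) * hI
end
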